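/- Let D ⊆ ℝⁿ be a compact convex set with nonempty interior, let φ : D → ℝ be continuous with φ(z) > 0 for all z ∈ D, and let N ≥ 2. If x = (x₁, …, x_N) ∈ (int D)ᴺ has pairwise distinct components and x is a local minimizer of the locational cost L(y) := Σ_{p=1}^N ∫_{V_p(y)} ‖y_p − z‖²·φ(z) dz, then x is a centroidal Voronoi configuration: x_p = c_p(x) for every p, where c_p(x) := (∫_{V_p(x)} z·φ(z) dz)/(∫_{V_p(x)} φ(z) dz). -/

import Mathlib

open MeasureTheory

/-- The Voronoi cell of agent `p` in workspace `D` for configuration `y`. -/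
def VCell {n N : ℕ} (D : Set (EuclideanSpace ℝ (Fin n)))
    (y : Fin N → EuclideanSpace ℝ (Fin n)) (p : Fin N) : Set (EuclideanSpace ℝ (Fin n)) :=
  {z ∈ D | ∀ r : Fin N, r ≠ p → ‖y p - z‖ ≤ ‖y r - z‖}

/-- The locational cost of configuration `y` over workspace `D` with density `φ`. -/
noncomputable def locCost {n N : ℕ} (D : Set (EuclideanSpace ℝ (Fin n)))
    (φ : EuclideanSpace ℝ (Fin n) → ℝ) (y : Fin N → EuclideanSpace ℝ (Fin n)) : ℝ :=
  ∑ p : Fin N, ∫ z in VCell D y p, ‖y p - z‖ ^ 2 * φ z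

/-- The centroid of agent `p`'s Voronoi cell. -/
noncomputable def vCentroid {n N : ℕ} (D : Set (EuclideanSpace ℝ (Fin n)))
    (φ : EuclideanSpace ℝ (Fin n) → ℝ) (x : Fin N → EuclideanSpace ℝ (Fin n))
    (p : Fin N) : EuclideanSpace ℝ (Fin n) :=
  (∫ z in VCell D x p, φ z)⁻¹ • ∫ z in VCell D x p, φ z • z

/-!
Moving one agent while freezing the Voronoi cells of `x` can only overestimate the true cost,
because among all partitions of the workspace the Voronoi partition is the cheapest one for a given
configuration of distinct points; the two costs agree at `x`. Hence `x p` is a local minimizer of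
`a ↦ ∫ ‖a - z‖² φ z` over its own frozen cell. By the parallel axis (Huygens–Steiner) theorem this
function is a constant plus a positive multiple of the squared distance from `a` to the centroid of
the cell, so the centroid is its only local minimizer.
-/

open Filter Topology Metric Function

theorem eventually_nhds_injective {ι X : Type*} [Finite ι] [TopologicalSpace X] [T2Space X]
    {x : ι → X} (hx : Injective x) : ∀ᶠ y in 𝓝 x, Injective y := by
  have hne : ∀ᶠ y in 𝓝 x, ∀ i j, i ≠ j → y i ≠ y j := by
    simp only [eventually_all]
    exact fun i j hij =>
      (isOpen_ne_fun (continuous_apply i) (continuous_apply j)).mem_nhds (hx.ne hij)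
  filter_upwards [hne] with y hy i j
  exact not_imp_not.1 (hy i j)

theorem eq_of_isLocalMin_dist {E : Type*} [NormedAddCommGroup E] [NormedSpace ℝ E] {a c : E}
    (h : IsLocalMin (fun b => dist b c) a) : a = c := by
  have hle : dist a c ≤ dist c c := IsMinOn.of_isLocalMin_of_convex_univ h (convexOn_univ_dist c) c
  exact dist_le_zero.1 (hle.trans_eq (dist_self c))

theorem infDist_le_norm_sub {E : Type*} [SeminormedAddCommGroup E] {s : Set E} {a : E}
    (ha : a ∈ s) (z : E) : infDist z s ≤ ‖a - z‖ :=
  (infDist_le_dist_of_mem ha).trans_eq (dist_eq_norm' z a)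

section WeightedMean

variable {α E : Type*} [MeasurableSpace α] {μ : Measure α} [NormedAddCommGroup E]
  {w : α → ℝ} {f : α → E}

/-- The barycenter of `f` under the density `w` with respect to `μ`; it is the junk value `0` when
the total weight vanishes. For `f = id` and Lebesgue measure on a Voronoi cell it is `vCentroid`. -/
noncomputable def weightedMean [NormedSpace ℝ E] (μ : Measure α) (w : α → ℝ) (f : α → E) : E :=
  (∫ z, w z ∂μ)⁻¹ • ∫ z, w z • f z ∂μ

theorem integrable_smul_of_integrable_norm_sq_mul [NormedSpace ℝ E]
    (hf : AEStronglyMeasurable f μ) (hw : Integrable w μ)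
    (hfw : Integrable (fun z => ‖f z‖ ^ 2 * w z) μ) :
    Integrable (fun z => w z • f z) μ := by
  refine (hw.norm.add hfw.norm).mono' (hw.aestronglyMeasurable.smul hf) (.of_forall fun z => ?_)
  have hquad : ‖f z‖ ≤ 1 + ‖f z‖ ^ 2 := by nlinarith [sq_nonneg (‖f z‖ - 1)]
  calc ‖w z • f z‖ = ‖w z‖ * ‖f z‖ := norm_smul _ _
    _ ≤ ‖w z‖ * (1 + ‖f z‖ ^ 2) := by gcongr
    _ = ‖w z‖ + ‖‖f z‖ ^ 2 * w z‖ := by rw [norm_mul, norm_pow, norm_norm]; ring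

theorem integrable_norm_sub_sq_mul (hf : AEStronglyMeasurable f μ) (hw : Integrable w μ)
    (hfw : Integrable (fun z => ‖f z‖ ^ 2 * w z) μ) (a : E) :
    Integrable (fun z => ‖a - f z‖ ^ 2 * w z) μ := by
  refine ((hw.norm.const_mul (2 * ‖a‖ ^ 2)).add (hfw.norm.const_mul 2)).mono'
    (((aestronglyMeasurable_const.sub hf).norm.pow 2).mul hw.aestronglyMeasurable)
    (.of_forall fun z => ?_)
  have hquad : ‖a - f z‖ ^ 2 ≤ 2 * (‖a‖ ^ 2 + ‖f z‖ ^ 2) :=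
    (pow_le_pow_left₀ (norm_nonneg _) (norm_sub_le a (f z)) 2).trans add_sq_le
  calc ‖‖a - f z‖ ^ 2 * w z‖ = ‖a - f z‖ ^ 2 * ‖w z‖ := by rw [norm_mul, norm_pow, norm_norm]
    _ ≤ 2 * (‖a‖ ^ 2 + ‖f z‖ ^ 2) * ‖w z‖ := by gcongr
    _ = 2 * ‖a‖ ^ 2 * ‖w z‖ + 2 * ‖‖f z‖ ^ 2 * w z‖ := by
      rw [norm_mul, norm_pow, norm_norm]; ring

theorem integrable_infDist_sq_mul (hf : AEStronglyMeasurable f μ) (hw : Integrable w μ)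
    (hfw : Integrable (fun z => ‖f z‖ ^ 2 * w z) μ) {s : Set E} (hs : s.Nonempty) :
    Integrable (fun z => infDist (f z) s ^ 2 * w z) μ := by
  obtain ⟨a, ha⟩ := hs
  refine (integrable_norm_sub_sq_mul hf hw hfw a).mono
    ((((continuous_infDist_pt s).comp_aestronglyMeasurable hf).pow 2).mul hw.aestronglyMeasurable)
    (.of_forall fun z => ?_)
  simp only [norm_mul, norm_pow, norm_norm, Real.norm_of_nonneg infDist_nonneg]
  gcongr
  · exact infDist_nonneg
  · exact infDist_le_norm_sub ha (f z)

variable [InnerProductSpace ℝ E] [CompleteSpace E]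

theorem integral_inner_smul_weightedMean_sub_eq_zero (hw : Integrable w μ)
    (hwf : Integrable (fun z => w z • f z) μ) (hw0 : ∫ z, w z ∂μ ≠ 0) (v : E) :
    ∫ z, inner ℝ v (w z • weightedMean μ w f - w z • f z) ∂μ = 0 := by
  have hint : Integrable (fun z => w z • weightedMean μ w f - w z • f z) μ :=
    (hw.smul_const _).sub hwf
  rw [integral_inner hint, integral_sub (hw.smul_const _) hwf, integral_smul_const,
    weightedMean, smul_inv_smul₀ hw0, sub_self, inner_zero_right]

theorem integral_norm_sub_sq_mul_eq_add (hf : AEStronglyMeasurable f μ) (hw : Integrable w μ)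
    (hfw : Integrable (fun z => ‖f z‖ ^ 2 * w z) μ) (hw0 : ∫ z, w z ∂μ ≠ 0) (a : E) :
    ∫ z, ‖a - f z‖ ^ 2 * w z ∂μ =
      (∫ z, ‖weightedMean μ w f - f z‖ ^ 2 * w z ∂μ) +
        dist a (weightedMean μ w f) ^ 2 * ∫ z, w z ∂μ := by
  set c := weightedMean μ w f with hc
  have hwf := integrable_smul_of_integrable_norm_sq_mul hf hw hfw
  have hcross : Integrable (fun z => inner ℝ (a - c) (w z • c - w z • f z)) μ :=
    ((hw.smul_const c).sub hwf).const_inner (a - c)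
  have hsq := integrable_norm_sub_sq_mul hf hw hfw c
  have hsum : Integrable (fun z => ‖c - f z‖ ^ 2 * w z + dist a c ^ 2 * w z) μ :=
    hsq.add (hw.const_mul _)
  have hexpand : ∀ z, ‖a - f z‖ ^ 2 * w z = ‖c - f z‖ ^ 2 * w z + dist a c ^ 2 * w z +
      2 * inner ℝ (a - c) (w z • c - w z • f z) := fun z => by
    rw [← sub_add_sub_cancel a c (f z), norm_add_sq_real, ← smul_sub, inner_smul_right,
      dist_eq_norm]
    ring
  simp only [hexpand]
  rw [integral_add hsum (hcross.const_mul 2), integral_add hsq (hw.const_mul _),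
    integral_const_mul, integral_const_mul, hc,
    integral_inner_smul_weightedMean_sub_eq_zero hw hwf hw0, mul_zero, add_zero]

theorem eq_weightedMean_of_isLocalMin (hf : AEStronglyMeasurable f μ) (hw : Integrable w μ)
    (hfw : Integrable (fun z => ‖f z‖ ^ 2 * w z) μ) (hw0 : 0 < ∫ z, w z ∂μ) {a : E}
    (hmin : IsLocalMin (fun b => ∫ z, ‖b - f z‖ ^ 2 * w z ∂μ) a) :
    a = weightedMean μ w f := by
  refine eq_of_isLocalMin_dist (hmin.mono fun b hb => ?_)
  beta_reduce at hb ⊢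
  rwa [integral_norm_sub_sq_mul_eq_add hf hw hfw hw0.ne' a,
    integral_norm_sub_sq_mul_eq_add hf hw hfw hw0.ne' b, add_le_add_iff_left,
    mul_le_mul_iff_left₀ hw0, sq_le_sq₀ dist_nonneg dist_nonneg] at hb

end WeightedMean

section Voronoi

variable {n N : ℕ} {D : Set (EuclideanSpace ℝ (Fin n))}
  {φ : EuclideanSpace ℝ (Fin n) → ℝ} {x y : Fin N → EuclideanSpace ℝ (Fin n)}

theorem VCell_subset (p : Fin N) : VCell D y p ⊆ D := fun _ hz => hz.1

theorem measurableSet_VCell (hD : MeasurableSet D) (p : Fin N) :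
    MeasurableSet (VCell D y p) := by
  have hclosed : IsClosed {z | ∀ r : Fin N, r ≠ p → ‖y p - z‖ ≤ ‖y r - z‖} := by
    simp only [Set.ofPred_forall]
    exact isClosed_iInter fun r => isClosed_iInter fun _ => isClosed_le (by fun_prop) (by fun_prop)
  exact hD.inter hclosed.measurableSet

theorem norm_sub_le_of_mem_VCell {p : Fin N} {z : EuclideanSpace ℝ (Fin n)}
    (hz : z ∈ VCell D y p) (r : Fin N) : ‖y p - z‖ ≤ ‖y r - z‖ := by
  rcases eq_or_ne r p with rfl | hr
  · exact le_rfl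
  · exact hz.2 r hr

theorem iUnion_VCell [Nonempty (Fin N)] : ⋃ p, VCell D y p = D := by
  refine Set.Subset.antisymm (Set.iUnion_subset VCell_subset) fun z hz => ?_
  obtain ⟨p, hp⟩ := Finite.exists_min fun r => ‖y r - z‖
  exact Set.mem_iUnion.2 ⟨p, hz, fun r _ => hp r⟩

theorem VCell_inter_VCell_subset_perpBisector (p q : Fin N) :
    VCell D y p ∩ VCell D y q ⊆ AffineSubspace.perpBisector (y p) (y q) := by
  rintro z ⟨hp, hq⟩
  rw [SetLike.mem_coe, AffineSubspace.mem_perpBisector_iff_dist_eq', dist_eq_norm, dist_eq_norm]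
  exact le_antisymm (norm_sub_le_of_mem_VCell hp q) (norm_sub_le_of_mem_VCell hq p)

theorem pairwise_aedisjoint_VCell (μ : Measure (EuclideanSpace ℝ (Fin n))) [μ.IsAddHaarMeasure]
    (hy : Injective y) : Pairwise (AEDisjoint μ on VCell D y) := fun p q hpq =>
  measure_mono_null (VCell_inter_VCell_subset_perpBisector p q) <|
    Measure.addHaar_affineSubspace _ _ fun h => hy.ne hpq (AffineSubspace.perpBisector_eq_top.1 h)

theorem infDist_range_of_mem_VCell {p : Fin N} {z : EuclideanSpace ℝ (Fin n)}
    (hz : z ∈ VCell D y p) : infDist z (Set.range y) = ‖y p - z‖ := by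
  refine (infDist_le_norm_sub (Set.mem_range_self p) z).antisymm
    ((le_infDist (Set.range_nonempty_iff_nonempty.2 ⟨p⟩)).2 ?_)
  rintro _ ⟨r, rfl⟩
  exact (norm_sub_le_of_mem_VCell hz r).trans_eq (dist_eq_norm' z (y r)).symm

theorem locCost_eq_setIntegral_infDist [Nonempty (Fin N)] (hD : MeasurableSet D)
    (hφ : IntegrableOn φ D) (hφ2 : IntegrableOn (fun z => ‖z‖ ^ 2 * φ z) D) (hy : Injective y) :
    locCost D φ y = ∫ z in D, infDist z (Set.range y) ^ 2 * φ z := by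
  have hint : IntegrableOn (fun z => infDist z (Set.range y) ^ 2 * φ z) D :=
    integrable_infDist_sq_mul aestronglyMeasurable_id hφ hφ2 (Set.range_nonempty y)
  have htile := integral_iUnion_ae (fun p => (measurableSet_VCell hD p).nullMeasurableSet)
    (pairwise_aedisjoint_VCell volume hy) (by rwa [iUnion_VCell])
  rw [iUnion_VCell, tsum_fintype] at htile
  rw [htile, locCost]
  refine Finset.sum_congr rfl fun p _ => setIntegral_congr_fun (measurableSet_VCell hD p)
    fun z hz => ?_
  simp only [infDist_range_of_mem_VCell hz]

theorem locCost_le_sum_setIntegral [Nonempty (Fin N)] (hφ : IntegrableOn φ D)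
    (hφ2 : IntegrableOn (fun z => ‖z‖ ^ 2 * φ z) D)
    (hφ0 : ∀ z ∈ D, 0 ≤ φ z) (hy : Injective y) {A : Fin N → Set (EuclideanSpace ℝ (Fin n))}
    (hA : ∀ p, MeasurableSet (A p)) (hAdisj : Pairwise (AEDisjoint volume on A))
    (hAD : ⋃ p, A p = D) :
    locCost D φ y ≤ ∑ p, ∫ z in A p, ‖y p - z‖ ^ 2 * φ z := by
  have hint : IntegrableOn (fun z => infDist z (Set.range y) ^ 2 * φ z) D :=
    integrable_infDist_sq_mul aestronglyMeasurable_id hφ hφ2 (Set.range_nonempty y)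
  have hsub : ∀ p, A p ⊆ D := fun p => hAD ▸ Set.subset_iUnion A p
  calc locCost D φ y = ∫ z in D, infDist z (Set.range y) ^ 2 * φ z :=
        locCost_eq_setIntegral_infDist (hAD ▸ .iUnion hA) hφ hφ2 hy
    _ = ∑ p, ∫ z in A p, infDist z (Set.range y) ^ 2 * φ z := by
        rw [← hAD, integral_iUnion_ae (fun p => (hA p).nullMeasurableSet) hAdisj (by rwa [hAD]),
          tsum_fintype]
    _ ≤ ∑ p, ∫ z in A p, ‖y p - z‖ ^ 2 * φ z := by
        refine Finset.sum_le_sum fun p _ => setIntegral_mono_on (hint.mono_set (hsub p))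
          (IntegrableOn.mono_set (integrable_norm_sub_sq_mul aestronglyMeasurable_id hφ hφ2 (y p))
            (hsub p)) (hA p) fun z hz => ?_
        have hφz := hφ0 z (hsub p hz)
        gcongr
        · exact infDist_nonneg
        · exact infDist_le_norm_sub (Set.mem_range_self p) z

theorem isLocalMin_setIntegral_VCell (hD : MeasurableSet D) (hφ : IntegrableOn φ D)
    (hφ2 : IntegrableOn (fun z => ‖z‖ ^ 2 * φ z) D) (hφ0 : ∀ z ∈ D, 0 ≤ φ z) (hx : Injective x)
    (hmin : IsLocalMin (locCost D φ) x) (p : Fin N) :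
    IsLocalMin (fun a => ∫ z in VCell D x p, ‖a - z‖ ^ 2 * φ z) (x p) := by
  have : Nonempty (Fin N) := ⟨p⟩
  have hmove : Tendsto (update x p) (𝓝 (x p)) (𝓝 x) := by
    have hcont : Continuous (update x p) := continuous_const.update p continuous_id
    simpa only [update_eq_self] using hcont.tendsto (x p)
  filter_upwards [hmove.eventually hmin, hmove.eventually (eventually_nhds_injective hx)]
    with a hle hinj
  have hfrozen := hle.trans <| locCost_le_sum_setIntegral hφ hφ2 hφ0 hinj
    (measurableSet_VCell hD) (pairwise_aedisjoint_VCell volume hx) iUnion_VCell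
  have hothers : ∑ q ∈ Finset.univ.erase p, ∫ z in VCell D x q, ‖update x p a q - z‖ ^ 2 * φ z =
      ∑ q ∈ Finset.univ.erase p, ∫ z in VCell D x q, ‖x q - z‖ ^ 2 * φ z :=
    Finset.sum_congr rfl fun q hq => by rw [update_of_ne (Finset.ne_of_mem_erase hq)]
  rwa [locCost, ← Finset.add_sum_erase _ _ (Finset.mem_univ p),
    ← Finset.add_sum_erase _ _ (Finset.mem_univ p), hothers, update_self,
    add_le_add_iff_right] at hfrozen

theorem VCell_mem_nhds (hx : Injective x) {p : Fin N} (hxp : x p ∈ interior D) :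
    VCell D x p ∈ 𝓝 (x p) := by
  have hcloser : ∀ᶠ z in 𝓝 (x p), ∀ r, r ≠ p → ‖x p - z‖ ≤ ‖x r - z‖ := by
    simp only [eventually_all]
    refine fun r hr => (Tendsto.eventually_lt (f := fun z => ‖x p - z‖)
      (g := fun z => ‖x r - z‖) (Continuous.tendsto (by fun_prop) _)
      (Continuous.tendsto (by fun_prop) _) ?_).mono fun _ => le_of_lt
    rw [sub_self, norm_zero, norm_pos_iff]
    exact sub_ne_zero.2 (hx.ne hr)
  exact inter_mem (mem_interior_iff_mem_nhds.1 hxp) hcloser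

theorem setIntegral_VCell_pos (hD : MeasurableSet D) (hφ : IntegrableOn φ D)
    (hφpos : ∀ z ∈ D, 0 < φ z) (hx : Injective x) {p : Fin N} (hxp : x p ∈ interior D) :
    0 < ∫ z in VCell D x p, φ z := by
  have hpos : ∀ z ∈ VCell D x p, 0 < φ z := fun z hz => hφpos z (VCell_subset p hz)
  rw [setIntegral_pos_iff_support_of_nonneg_ae
    (ae_restrict_of_forall_mem (measurableSet_VCell hD p) fun z hz => (hpos z hz).le)
    (hφ.mono_set (VCell_subset p)),
    Set.inter_eq_right.2 fun z hz => mem_support.2 (hpos z hz).ne']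
  exact Measure.measure_pos_of_mem_nhds volume (VCell_mem_nhds hx hxp)

end Voronoi

theorem stmt17_general {n N : ℕ} {D : Set (EuclideanSpace ℝ (Fin n))} (hD : MeasurableSet D)
    {φ : EuclideanSpace ℝ (Fin n) → ℝ} (hφ : IntegrableOn φ D)
    (hφ2 : IntegrableOn (fun z => ‖z‖ ^ 2 * φ z) D) (hφ0 : ∀ z ∈ D, 0 ≤ φ z)
    {x : Fin N → EuclideanSpace ℝ (Fin n)} (hx : Injective x)
    (hmin : IsLocalMin (locCost D φ) x) {p : Fin N} (hmass : ∫ z in VCell D x p, φ z ≠ 0) :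
    x p = vCentroid D φ x p := by
  have hsub : VCell D x p ⊆ D := VCell_subset p
  have hmass_pos : 0 < ∫ z in VCell D x p, φ z :=
    (setIntegral_nonneg (measurableSet_VCell hD p) fun z hz => hφ0 z (hsub hz)).lt_of_ne' hmass
  exact eq_weightedMean_of_isLocalMin aestronglyMeasurable_id (hφ.mono_set hsub)
    (hφ2.mono_set hsub) hmass_pos (isLocalMin_setIntegral_VCell hD hφ hφ2 hφ0 hx hmin p)

theorem stmt17 {n N : ℕ} (hn : 1 ≤ n) (hN : 2 ≤ N)
    (D : Set (EuclideanSpace ℝ (Fin n))) (hDcomp : IsCompact D) (hDconv : Convex ℝ D)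
    (hDint : (interior D).Nonempty)
    (φ : EuclideanSpace ℝ (Fin n) → ℝ) (hφ : ContinuousOn φ D)
    (hφpos : ∀ z ∈ D, 0 < φ z)
    (x : Fin N → EuclideanSpace ℝ (Fin n)) (hxD : ∀ p, x p ∈ interior D)
    (hdist : ∀ p q : Fin N, p ≠ q → x p ≠ x q)
    (hmin : IsLocalMin (locCost D φ) x) :
    ∀ p : Fin N, x p = vCentroid D φ x p := by
  have hx : Injective x := fun i j => not_imp_not.1 (hdist i j)
  have hφint : IntegrableOn φ D := hφ.integrableOn_compact hDcomp
  exact fun p => stmt17_general hDcomp.measurableSet hφint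
    ((ContinuousOn.mul (by fun_prop) hφ).integrableOn_compact hDcomp) (fun z hz => (hφpos z hz).le)
    hx hmin (setIntegral_VCell_pos hDcomp.measurableSet hφint hφpos hx (hxD p)).ne'
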